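/- Let α, a, x, y, z, t, ω ∈ ℂ and r̃, s̃ ∈ ℤ with r̃ > s̃, ω ≠ 0, x ≠ 0, max{|xω|, |xt|} < 1, and y ω q^m ≠ 1 for all integers m ≥ 0. Then the double series ∑_{n=0}^∞ ∑_{m=0}^∞ L̃_{n+m}^{(r̃,s̃)}(α,x,y,z,a) · (t^n/(q;q)_n) · (ω^m/(q;q)_m) converges absolutely and its sum equals ((yω;q)_∞/(xω;q)_∞) · ∑_{k=0}^∞ ∑_{j=0}^{k} q^{kα + r̃·C(k,2) − s̃·C(k+1,2)} · ((−q^{−α};q)_k (a;q)_k (ωz)^k / ((−q;q)_k (q;q)_{k−j})) · ((xω;q)_j (t/ω)^j / ((yω;q)_j (q;q)_j)) · ₂Φ₁[y/x, 0; yω q^j; q; xt]. -/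

import Mathlib

noncomputable section

/-- The q-shifted factorial `(a;q)_n`. -/
def qPoch (q a : ℂ) (n : ℕ) : ℂ := ∏ j ∈ Finset.range n, (1 - a * q ^ j)

/-- The infinite q-shifted factorial `(a;q)_∞`. -/
def qPochInf (q a : ℂ) : ℂ := ∏' j : ℕ, (1 - a * q ^ j)

/-- The q-binomial coefficient `[n k]_q`. -/
def qBinom (q : ℂ) (n k : ℕ) : ℂ := qPoch q q n / (qPoch q q k * qPoch q q (n - k))

/-- The Cauchy polynomials `p_n(x,y)`. -/
def cauchyP (q x y : ℂ) (n : ℕ) : ℂ := ∏ j ∈ Finset.range n, (x - q ^ j * y)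

/-- The generalized q-binomial coefficient `[α k]_{-q}`. -/
def genQBinom (q α : ℂ) (k : ℕ) : ℂ :=
  qPoch q (-(q ^ (-α))) k / qPoch q (-q) k * q ^ (α * (k : ℂ) - (k.choose 2 : ℂ))

/-- The generalized q-polynomials `L̃_n^{(r,s)}(α,x,y,z,a)`. -/
def Ltil (q : ℂ) (r s : ℤ) (α x y z a : ℂ) (n : ℕ) : ℂ :=
  ∑ k ∈ Finset.range (n + 1),
    qBinom q n k * genQBinom q α k *
      q ^ (r * (k.choose 2 : ℤ) - s * ((k + 1).choose 2 : ℤ) + (k.choose 2 : ℤ)) *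
      qPoch q a k * cauchyP q x y (n - k) * z ^ k

/-- The basic hypergeometric series `₂Φ₁[a,b;c;q;z]`. -/
def Phi21 (q a b c z : ℂ) : ℂ :=
  ∑' n : ℕ, qPoch q a n * qPoch q b n / (qPoch q c n * qPoch q q n) * z ^ n

/-- The basic hypergeometric series `₄Φ₃`. -/
def Phi43 (q a₁ a₂ a₃ a₄ b₁ b₂ b₃ z : ℂ) : ℂ :=
  ∑' n : ℕ, qPoch q a₁ n * qPoch q a₂ n * qPoch q a₃ n * qPoch q a₄ n /
    (qPoch q b₁ n * qPoch q b₂ n * qPoch q b₃ n * qPoch q q n) * z ^ n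

/-- The trivariate q-polynomials `F_n(x,y,z;q)`. -/
def Ftri (q x y z : ℂ) (n : ℕ) : ℂ :=
  (-1) ^ n * q ^ (-(n.choose 2 : ℤ)) *
    ∑ k ∈ Finset.range (n + 1),
      qBinom q n k * q ^ (k.choose 2) * (-z) ^ k * cauchyP q y x (n - k)

/-- The Hahn (Al-Salam–Carlitz) polynomials `φ_n^{(σ)}(x|q)`. -/
def hahnPhi (q σ x : ℂ) (n : ℕ) : ℂ :=
  ∑ k ∈ Finset.range (n + 1), qBinom q n k * qPoch q σ k * x ^ k

/-- The q-derivative operator `D_a`. -/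
def Dq (q : ℂ) (f : ℂ → ℂ) : ℂ → ℂ := fun a => (f a - f (q * a)) / a

/-- The homogeneous q-difference operator `D_{xy}`. -/
def Dxy (q : ℂ) (f : ℂ → ℂ → ℂ) : ℂ → ℂ → ℂ :=
  fun x y => (f x (y / q) - f (q * x) y) / (x - y / q)

/-!
Summing over `n + m = N` first turns the left-hand side into `∑ P_N h_N(t, ω) / (q;q)_N`, where
`P_N` is the generalized `q`-polynomial and `h_N` the Rogers–Szegő polynomial. Since
`P_N = ∑ₖ [N k]_q c_k p_{N-k}(x, y)`, the sequence `P_N / (q;q)_N` is the Cauchy product of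
`c_k / (q;q)_k` and `p_m(x, y) / (q;q)_m`, and everything reduces to the sums
`∑ₘ p_m(x, y) h_{k+m}(t, ω) / (q;q)_m`.

The two summands of the operator `f ↦ w f(w) + t f(w q)` `q`-commute and its powers applied to `1`
are the `h_N`, so the noncommutative `q`-binomial theorem expands `h_{k+m}(t, ω)` in the
`h_m(t, ω q ^ j)`, `j ≤ k`. This leaves the case `k = 0`, in which the `q`-binomial theorem sums one
of the two series contained in `h_m` and the other one is the `₂Φ₁`.

Apart from geometric series, absolute convergence rests on `∑ c_k x ^ (-k)` alone, which converges
for `s < r` because of the factor `q ^ ((r - s) * C(k, 2))` in `c_k`.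
-/

open Filter Topology Finset

section Summation

lemma hasSum_sum_antidiagonal {A E : Type*} [AddMonoid A] [HasAntidiagonal A] [AddCommMonoid E]
    [TopologicalSpace E] [ContinuousAdd E] [RegularSpace E] {f : A × A → E} {e : E}
    (hf : HasSum f e) : HasSum (fun n => ∑ p ∈ antidiagonal n, f p) e :=
  (HasAntidiagonal.sigmaAntidiagonalEquivProd.hasSum_iff.mpr hf).sigma
    fun n => (antidiagonal n).hasSum f

lemma summable_mul_comp_add {f g : ℕ → ℝ} (hf : Summable f) (hg : Summable g) (hf0 : 0 ≤ f)
    (hg0 : 0 ≤ g) : Summable fun p : ℕ × ℕ => f p.1 * g (p.1 + p.2) := by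
  have hinj : Function.Injective fun p : ℕ × ℕ => (p.1, p.1 + p.2) := by
    rintro ⟨k, m⟩ ⟨k', m'⟩ h
    simp only [Prod.mk.injEq] at h ⊢
    lia
  exact (hf.mul_of_nonneg hg hf0 hg0).comp_injective hinj

lemma summable_pow_mul_pow_choose_two {𝕜 : Type*} [NormedField 𝕜] [CompleteSpace 𝕜] (c : 𝕜)
    {q : 𝕜} (hq : ‖q‖ < 1) : Summable fun k : ℕ => c ^ k * q ^ k.choose 2 := by
  have hlim : Tendsto (fun k : ℕ => ‖c * q ^ k‖) atTop (𝓝 0) := by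
    simpa only [mul_zero, norm_zero] using
      ((tendsto_pow_atTop_nhds_zero_of_norm_lt_one hq).const_mul c).norm
  refine summable_of_ratio_norm_eventually_le (r := 1 / 2) (by norm_num) ?_
  filter_upwards [hlim.eventually_le_const (show (0 : ℝ) < 1 / 2 by norm_num)] with k hk
  calc ‖c ^ (k + 1) * q ^ (k + 1).choose 2‖ = ‖c * q ^ k‖ * ‖c ^ k * q ^ k.choose 2‖ := by
        rw [← norm_mul, Nat.choose_succ_succ' k 1, Nat.choose_one_right, pow_add, pow_succ]
        ring_nf
    _ ≤ 1 / 2 * ‖c ^ k * q ^ k.choose 2‖ := by gcongr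

lemma exists_norm_le_of_tendsto {E : Type*} [SeminormedAddCommGroup E] {f : ℕ → E} {l : E}
    (hf : Tendsto f atTop (𝓝 l)) : ∃ C, ∀ n, ‖f n‖ ≤ C :=
  let ⟨C, hC⟩ := hf.norm.bddAbove_range
  ⟨C, fun n => hC ⟨n, rfl⟩⟩

end Summation

section NormedDivisionRing

variable {𝕜 : Type*} [NormedDivisionRing 𝕜] {q a : 𝕜}

lemma norm_mul_pow_le (hq : ‖q‖ ≤ 1) (a : 𝕜) (n : ℕ) : ‖a * q ^ n‖ ≤ ‖a‖ := by
  rw [norm_mul, norm_pow]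
  exact mul_le_of_le_one_right (norm_nonneg a) (pow_le_one₀ (norm_nonneg q) hq)

lemma mul_pow_ne_one (hq : ‖q‖ ≤ 1) (ha : ‖a‖ < 1) (n : ℕ) : a * q ^ n ≠ 1 := fun h =>
  ((norm_mul_pow_le hq a n).trans_lt ha).ne (h ▸ norm_one)

end NormedDivisionRing

section QPochhammer

variable {q : ℂ}

lemma qPoch_zero (q a : ℂ) : qPoch q a 0 = 1 := prod_range_zero _

lemma qPoch_succ (q a : ℂ) (n : ℕ) : qPoch q a (n + 1) = qPoch q a n * (1 - a * q ^ n) :=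
  prod_range_succ _ n

lemma qPoch_add (q a : ℂ) (n m : ℕ) :
    qPoch q a (n + m) = qPoch q a n * qPoch q (a * q ^ n) m := by
  simp only [qPoch, prod_range_add, pow_add, mul_assoc]

lemma qPoch_zero_left (q : ℂ) (n : ℕ) : qPoch q 0 n = 1 := by
  simp only [qPoch, zero_mul, sub_zero, prod_const_one]

lemma qPoch_ne_zero {a : ℂ} (ha : ∀ m : ℕ, a * q ^ m ≠ 1) (n : ℕ) : qPoch q a n ≠ 0 :=
  prod_ne_zero_iff.mpr fun j _ => sub_ne_zero.mpr (ha j).symm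

lemma qPoch_ne_zero_of_norm_lt_one {a : ℂ} (hq : ‖q‖ ≤ 1) (ha : ‖a‖ < 1) (n : ℕ) :
    qPoch q a n ≠ 0 :=
  qPoch_ne_zero (mul_pow_ne_one hq ha) n

lemma cauchyP_eq_pow_mul_qPoch (q : ℂ) {x : ℂ} (hx : x ≠ 0) (y : ℂ) (n : ℕ) :
    cauchyP q x y n = x ^ n * qPoch q (y / x) n := by
  rw [cauchyP, qPoch, pow_eq_prod_const, ← prod_mul_distrib]
  refine prod_congr rfl fun j _ => ?_
  field_simp

lemma summable_norm_neg_mul_pow (hq : ‖q‖ < 1) (a : ℂ) : Summable fun j : ℕ => ‖-(a * q ^ j)‖ := by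
  simp only [norm_neg, norm_mul, norm_pow]
  exact (summable_geometric_of_lt_one (norm_nonneg q) hq).mul_left ‖a‖

lemma tendsto_qPoch (hq : ‖q‖ < 1) (a : ℂ) :
    Tendsto (qPoch q a) atTop (𝓝 (qPochInf q a)) := by
  have h := multipliable_one_add_of_summable (summable_norm_neg_mul_pow hq a)
  simp only [← sub_eq_add_neg] at h
  exact h.hasProd.tendsto_prod_nat

lemma qPochInf_ne_zero (hq : ‖q‖ < 1) {a : ℂ} (ha : ∀ m : ℕ, a * q ^ m ≠ 1) :
    qPochInf q a ≠ 0 := by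
  have h := tprod_one_add_ne_zero_of_summable (f := fun j : ℕ => -(a * q ^ j))
    (fun j => by rw [← sub_eq_add_neg]; exact sub_ne_zero.mpr (ha j).symm)
    (summable_norm_neg_mul_pow hq a)
  simpa only [qPochInf, ← sub_eq_add_neg] using h

lemma qPoch_mul_qPochInf (hq : ‖q‖ < 1) (a : ℂ) (n : ℕ) :
    qPoch q a n * qPochInf q (a * q ^ n) = qPochInf q a := by
  have hshift : Tendsto (fun m => qPoch q a (n + m)) atTop (𝓝 (qPochInf q a)) := by
    simpa only [add_comm n] using (tendsto_add_atTop_iff_nat n).mpr (tendsto_qPoch hq a)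
  simp only [qPoch_add] at hshift
  exact tendsto_nhds_unique ((tendsto_qPoch hq _).const_mul _) hshift

lemma exists_norm_qPoch_le (hq : ‖q‖ < 1) (a : ℂ) : ∃ C, ∀ n, ‖qPoch q a n‖ ≤ C :=
  exists_norm_le_of_tendsto (tendsto_qPoch hq a)

lemma exists_norm_qPoch_div_qPoch_le (hq : ‖q‖ < 1) (a : ℂ) {b : ℂ}
    (hb : ∀ m : ℕ, b * q ^ m ≠ 1) : ∃ C, ∀ n, ‖qPoch q a n / qPoch q b n‖ ≤ C :=
  exists_norm_le_of_tendsto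
    ((tendsto_qPoch hq a).div (tendsto_qPoch hq b) (qPochInf_ne_zero hq hb))

lemma exists_norm_cauchyP_le (hq : ‖q‖ < 1) {x : ℂ} (hx : x ≠ 0) (y : ℂ) :
    ∃ C, ∀ n, ‖cauchyP q x y n‖ ≤ C * ‖x‖ ^ n := by
  obtain ⟨C, hC⟩ := exists_norm_qPoch_le hq (y / x)
  refine ⟨C, fun n => ?_⟩
  rw [cauchyP_eq_pow_mul_qPoch q hx, norm_mul, norm_pow, mul_comm]
  gcongr
  exact hC n

end QPochhammer

section QBinomialTheorem

variable {q : ℂ}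

/-- The basic hypergeometric series `₁Φ₀[b; -; q; w]`, the generating function in the
`q`-binomial theorem. -/
def Phi10 (q b w : ℂ) : ℂ := ∑' n : ℕ, qPoch q b n / qPoch q q n * w ^ n

lemma summable_norm_Phi10 (hq : ‖q‖ < 1) (b : ℂ) {w : ℂ} (hw : ‖w‖ < 1) :
    Summable fun n : ℕ => ‖qPoch q b n / qPoch q q n * w ^ n‖ := by
  obtain ⟨C, hC⟩ := exists_norm_qPoch_div_qPoch_le hq b (mul_pow_ne_one hq.le hq)
  refine Summable.of_nonneg_of_le (fun n => norm_nonneg _) (fun n => ?_)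
    ((summable_geometric_of_lt_one (norm_nonneg w) hw).mul_left C)
  rw [norm_mul, norm_pow]
  gcongr
  exact hC n

lemma summable_norm_pow_div_qPoch (hq : ‖q‖ < 1) {w : ℂ} (hw : ‖w‖ < 1) :
    Summable fun n : ℕ => ‖w ^ n / qPoch q q n‖ := by
  simpa only [qPoch_zero_left, one_div_mul_eq_div] using summable_norm_Phi10 hq 0 hw

lemma one_sub_mul_Phi10 (hq : ‖q‖ < 1) (b : ℂ) {w : ℂ} (hw : ‖w‖ < 1) :
    (1 - w) * Phi10 q b w = (1 - b * w) * Phi10 q b (w * q) := by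
  have hwq : ‖w * q‖ < 1 := by simpa only [pow_one] using (norm_mul_pow_le hq.le w 1).trans_lt hw
  have hs := (summable_norm_Phi10 hq b hw).of_norm
  have hsq := (summable_norm_Phi10 hq b hwq).of_norm
  have hcoeff (n : ℕ) : qPoch q b (n + 1) / qPoch q q (n + 1) * (1 - q ^ (n + 1)) =
      qPoch q b n / qPoch q q n * (1 - b * q ^ n) := by
    have hne := qPoch_ne_zero_of_norm_lt_one hq.le hq (n + 1)
    rw [qPoch_succ, ← pow_succ'] at hne
    rw [qPoch_succ, qPoch_succ, ← pow_succ' q n]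
    have h₁ := left_ne_zero_of_mul hne
    have h₂ := right_ne_zero_of_mul hne
    field_simp
  have hdiff : Phi10 q b w - Phi10 q b (w * q) = w * Phi10 q b w - b * w * Phi10 q b (w * q) := by
    simp only [Phi10]
    rw [← hs.tsum_sub hsq, ← tsum_mul_left, ← tsum_mul_left,
      ← (hs.mul_left w).tsum_sub (hsq.mul_left (b * w)), (hs.sub hsq).tsum_eq_zero_add]
    simp only [pow_zero, sub_self, zero_add]
    refine tsum_congr fun n => ?_
    linear_combination w ^ (n + 1) * hcoeff n
  linear_combination hdiff

lemma qPoch_mul_Phi10 (hq : ‖q‖ < 1) (b : ℂ) {w : ℂ} (hw : ‖w‖ < 1) (n : ℕ) :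
    qPoch q w n * Phi10 q b w = qPoch q (b * w) n * Phi10 q b (w * q ^ n) := by
  induction n with
  | zero => simp only [qPoch_zero, pow_zero, mul_one]
  | succ n ih =>
    have hstep := one_sub_mul_Phi10 hq b ((norm_mul_pow_le hq.le w n).trans_lt hw)
    rw [qPoch_succ, qPoch_succ, pow_succ, ← mul_assoc w]
    linear_combination (1 - w * q ^ n) * ih + qPoch q (b * w) n * hstep

lemma tendsto_Phi10_mul_pow (hq : ‖q‖ < 1) (b : ℂ) {w : ℂ} (hw : ‖w‖ < 1) :
    Tendsto (fun n : ℕ => Phi10 q b (w * q ^ n)) atTop (𝓝 1) := by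
  have hlim : Tendsto (fun n : ℕ => Phi10 q b (w * q ^ n)) atTop
      (𝓝 (∑' m : ℕ, qPoch q b m / qPoch q q m * 0 ^ m)) := by
    refine tendsto_tsum_of_dominated_convergence (summable_norm_Phi10 hq b hw) (fun m => ?_)
      (.of_forall fun n m => ?_)
    · have hw0 := (tendsto_pow_atTop_nhds_zero_of_norm_lt_one hq).const_mul w
      rw [mul_zero] at hw0
      exact (hw0.pow m).const_mul _
    · rw [norm_mul, norm_mul, norm_pow, norm_pow]
      gcongr
      exact norm_mul_pow_le hq.le w n
  rwa [tsum_eq_single 0 fun m hm => by rw [zero_pow hm, mul_zero], qPoch_zero, qPoch_zero,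
    pow_zero, div_one, mul_one] at hlim

lemma Phi10_eq_qPochInf_div (hq : ‖q‖ < 1) (b : ℂ) {w : ℂ} (hw : ‖w‖ < 1) :
    Phi10 q b w = qPochInf q (b * w) / qPochInf q w := by
  have hleft := (tendsto_qPoch hq w).mul_const (Phi10 q b w)
  have hright := (tendsto_qPoch hq (b * w)).mul (tendsto_Phi10_mul_pow hq b hw)
  simp only [← qPoch_mul_Phi10 hq b hw, mul_one] at hright
  rw [eq_div_iff (qPochInf_ne_zero hq (mul_pow_ne_one hq.le hw)), mul_comm]
  exact tendsto_nhds_unique hleft hright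

end QBinomialTheorem

section QCommuting

variable {q : ℂ}

lemma sum_antidiagonal_qBinom_succ_smul {E : Type*} [AddCommGroup E] [Module ℂ E]
    (hq : ∀ n, qPoch q q n ≠ 0) (f : ℕ → ℕ → E) (n : ℕ) :
    ∑ p ∈ antidiagonal (n + 1), qBinom q (n + 1) p.1 • f p.1 p.2 =
      ∑ p ∈ antidiagonal n, qBinom q n p.1 • (f p.1 (p.2 + 1) + q ^ p.2 • f (p.1 + 1) p.2) := by
  have hsub (m : ℕ) : (1 - q ^ (m + 1)) / qPoch q q (m + 1) = 1 / qPoch q q m := by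
    have h := hq (m + 1)
    rw [qPoch_succ, ← pow_succ'] at h ⊢
    have h₁ := left_ne_zero_of_mul h
    have h₂ := right_ne_zero_of_mul h
    field_simp
  -- `1 - q ^ (j + i) = (1 - q ^ i) + q ^ i * (1 - q ^ j)` gives the two terms of Pascal's rule.
  have hpascal : ∀ p ∈ antidiagonal (n + 1), qBinom q (n + 1) p.1 • f p.1 p.2 =
      (qPoch q q n / qPoch q q p.1 * ((1 - q ^ p.2) / qPoch q q p.2)) • f p.1 p.2 +
      (qPoch q q n * q ^ p.2 / qPoch q q p.2 * ((1 - q ^ p.1) / qPoch q q p.1)) • f p.1 p.2 := by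
    intro p hp
    rw [← add_smul, qBinom, qPoch_succ, ← pow_succ', ← mem_antidiagonal.mp hp,
      Nat.add_sub_cancel_left, pow_add]
    congr 1
    have h₁ := hq p.1
    have h₂ := hq p.2
    field_simp
    ring
  have hbinom : ∀ p ∈ antidiagonal n,
      qBinom q n p.1 = qPoch q q n / qPoch q q p.1 * (1 / qPoch q q p.2) := fun p hp => by
    rw [qBinom, ← mem_antidiagonal.mp hp, Nat.add_sub_cancel_left, div_mul_div_comm, mul_one]
  rw [sum_congr rfl hpascal, sum_add_distrib, Nat.sum_antidiagonal_succ',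
    Nat.sum_antidiagonal_succ]
  simp only [pow_zero, sub_self, zero_div, mul_zero, zero_smul, zero_add, hsub]
  rw [← sum_add_distrib]
  refine sum_congr rfl fun p hp => ?_
  rw [hbinom p hp]
  module

lemma mul_pow_of_mul_eq_smul_mul {R A : Type*} [CommSemiring R] [Semiring A] [Algebra R A]
    {r : R} {a b : A} (h : a * b = r • (b * a)) (n : ℕ) :
    a * b ^ n = r ^ n • (b ^ n * a) := by
  induction n with
  | zero => simp only [pow_zero, mul_one, one_mul, one_smul]
  | succ n ih =>
    rw [pow_succ, ← mul_assoc, ih, smul_mul_assoc, mul_assoc, h, mul_smul_comm, smul_smul,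
      ← pow_succ, mul_assoc]

lemma add_pow_of_mul_eq_smul_mul {A : Type*} [Ring A] [Algebra ℂ A]
    (hq : ∀ n, qPoch q q n ≠ 0) {a b : A} (h : a * b = q • (b * a)) (n : ℕ) :
    (a + b) ^ n = ∑ p ∈ antidiagonal n, qBinom q n p.1 • (b ^ p.2 * a ^ p.1) := by
  induction n with
  | zero => simp [qBinom, qPoch_zero]
  | succ n ih =>
    rw [pow_succ', ih, mul_sum, sum_antidiagonal_qBinom_succ_smul hq fun j i => b ^ i * a ^ j]
    refine sum_congr rfl fun p _ => ?_
    rw [mul_smul_comm, add_mul, ← mul_assoc, mul_pow_of_mul_eq_smul_mul h, smul_mul_assoc,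
      mul_assoc, ← pow_succ', ← mul_assoc b, ← pow_succ', add_comm]

end QCommuting

section RogersSzego

variable {q : ℂ}

/-- The homogeneous Rogers–Szegő polynomial `h_n(t, w | q) = ∑ⱼ [n j]_q t ^ j w ^ (n - j)`. -/
def rogersSzego (q t w : ℂ) (n : ℕ) : ℂ :=
  ∑ p ∈ antidiagonal n, qBinom q n p.1 * (t ^ p.1 * w ^ p.2)

/-- The operator `f ↦ t f(q ·)` on functions of `w`, the `q`-commuting partner of multiplication by
`w`. -/
def scaledDilation (q t : ℂ) : Module.End ℂ (ℂ → ℂ) := t • LinearMap.funLeft ℂ ℂ (· * q)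

/-- The operator `f ↦ w f(w) + t f(w q)`, whose powers applied to `1` are the Rogers–Szegő
polynomials. -/
def rogersSzegoOp (q t : ℂ) : Module.End ℂ (ℂ → ℂ) := scaledDilation q t + LinearMap.mulLeft ℂ id

lemma scaledDilation_pow_apply (q t : ℂ) (n : ℕ) (f : ℂ → ℂ) (w : ℂ) :
    (scaledDilation q t ^ n) f w = t ^ n * f (w * q ^ n) := by
  induction n generalizing w with
  | zero => simp only [pow_zero, Module.End.one_apply, mul_one, one_mul]
  | succ n ih =>
    rw [pow_succ', Module.End.mul_apply]
    change t * (scaledDilation q t ^ n) f (w * q) = _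
    rw [ih]
    ring_nf

lemma scaledDilation_mul_mulLeft_id (q t : ℂ) :
    scaledDilation q t * LinearMap.mulLeft ℂ id =
      q • (LinearMap.mulLeft ℂ id * scaledDilation q t) := by
  ext f w
  change t * (w * q * f (w * q)) = q * (w * (t * f (w * q)))
  ring

lemma rogersSzegoOp_pow_apply (hq : ∀ n, qPoch q q n ≠ 0) (t : ℂ) (n : ℕ) (f : ℂ → ℂ) (w : ℂ) :
    (rogersSzegoOp q t ^ n) f w =
      ∑ p ∈ antidiagonal n, qBinom q n p.1 * (t ^ p.1 * w ^ p.2) * f (w * q ^ p.1) := by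
  rw [rogersSzegoOp, add_pow_of_mul_eq_smul_mul hq (scaledDilation_mul_mulLeft_id q t),
    LinearMap.sum_apply, Finset.sum_apply]
  refine sum_congr rfl fun p _ => ?_
  rw [LinearMap.smul_apply, Pi.smul_apply, Module.End.mul_apply, LinearMap.pow_mulLeft,
    LinearMap.mulLeft_apply, Pi.mul_apply, scaledDilation_pow_apply, Pi.pow_apply, id, smul_eq_mul]
  ring

lemma rogersSzego_eq_rogersSzegoOp_pow (hq : ∀ n, qPoch q q n ≠ 0) (t w : ℂ) (n : ℕ) :
    rogersSzego q t w n = (rogersSzegoOp q t ^ n) 1 w := by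
  simp only [rogersSzegoOp_pow_apply hq, Pi.one_apply, mul_one, rogersSzego]

lemma rogersSzego_add (hq : ∀ n, qPoch q q n ≠ 0) (t w : ℂ) (k m : ℕ) :
    rogersSzego q t w (k + m) = ∑ p ∈ antidiagonal k,
      qBinom q k p.1 * (t ^ p.1 * w ^ p.2) * rogersSzego q t (w * q ^ p.1) m := by
  simp only [rogersSzego_eq_rogersSzegoOp_pow hq _ _ m]
  rw [rogersSzego_eq_rogersSzegoOp_pow hq, pow_add, Module.End.mul_apply,
    rogersSzegoOp_pow_apply hq]

lemma div_qPoch_mul_rogersSzego (hq : ∀ n, qPoch q q n ≠ 0) (f : ℕ → ℂ) (t w : ℂ) (n : ℕ) :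
    f n / qPoch q q n * rogersSzego q t w n = ∑ p ∈ antidiagonal n,
      f (p.1 + p.2) * (t ^ p.1 / qPoch q q p.1) * (w ^ p.2 / qPoch q q p.2) := by
  rw [rogersSzego, mul_sum]
  refine sum_congr rfl fun p hp => ?_
  rw [← mem_antidiagonal.mp hp, qBinom, Nat.add_sub_cancel_left]
  have h := hq (p.1 + p.2)
  field_simp

lemma summable_norm_comp_add_mul (hq : ‖q‖ < 1) {x t w : ℂ} (hxt : ‖x * t‖ < 1)
    (hxw : ‖x * w‖ < 1) {f : ℕ → ℂ} {C : ℝ} (hf : ∀ n, ‖f n‖ ≤ C * ‖x‖ ^ n) :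
    Summable fun p : ℕ × ℕ =>
      ‖f (p.1 + p.2) * (t ^ p.1 / qPoch q q p.1) * (w ^ p.2 / qPoch q q p.2)‖ := by
  refine .of_nonneg_of_le (fun p => norm_nonneg _) (fun p => ?_)
    (((summable_norm_pow_div_qPoch hq hxt).mul_norm
      (summable_norm_pow_div_qPoch hq hxw)).mul_left C)
  calc ‖f (p.1 + p.2) * (t ^ p.1 / qPoch q q p.1) * (w ^ p.2 / qPoch q q p.2)‖
      ≤ C * ‖x‖ ^ (p.1 + p.2) * ‖t ^ p.1 / qPoch q q p.1‖ * ‖w ^ p.2 / qPoch q q p.2‖ := by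
        rw [norm_mul, norm_mul]
        gcongr
        exact hf _
    _ = C * ‖(x * t) ^ p.1 / qPoch q q p.1 * ((x * w) ^ p.2 / qPoch q q p.2)‖ := by
        simp only [norm_mul, norm_div, norm_pow]
        ring

lemma hasSum_div_qPoch_mul_rogersSzego (hq : ‖q‖ < 1) {x t w : ℂ} (hxt : ‖x * t‖ < 1)
    (hxw : ‖x * w‖ < 1) {f : ℕ → ℂ} {C : ℝ} (hf : ∀ n, ‖f n‖ ≤ C * ‖x‖ ^ n) :
    HasSum (fun n => f n / qPoch q q n * rogersSzego q t w n)
      (∑' p : ℕ × ℕ, f (p.1 + p.2) * (t ^ p.1 / qPoch q q p.1) * (w ^ p.2 / qPoch q q p.2)) := by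
  simp only [div_qPoch_mul_rogersSzego (qPoch_ne_zero_of_norm_lt_one hq.le hq)]
  exact hasSum_sum_antidiagonal (summable_norm_comp_add_mul hq hxt hxw hf).of_norm.hasSum

lemma summable_pow_mul_rogersSzego (hq : ‖q‖ < 1) {x t w : ℂ} (hxt : ‖x * t‖ < 1)
    (hxw : ‖x * w‖ < 1) : Summable fun n => x ^ n * rogersSzego q t w n := by
  obtain ⟨C, hC⟩ := exists_norm_qPoch_le hq q
  have hbound (n : ℕ) : ‖qPoch q q n * x ^ n‖ ≤ C * ‖x‖ ^ n := by
    rw [norm_mul, norm_pow]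
    gcongr
    exact hC n
  refine (hasSum_div_qPoch_mul_rogersSzego hq hxt hxw hbound).summable.congr fun n => ?_
  rw [mul_div_cancel_left₀ _ (qPoch_ne_zero_of_norm_lt_one hq.le hq n)]

end RogersSzego

section CauchyRogersSzego

variable {q x t w : ℂ}

lemma tsum_cauchyP_add_mul (hq : ‖q‖ < 1) (hx : x ≠ 0) (y : ℂ) (hxw : ‖x * w‖ < 1) (n : ℕ) :
    ∑' m, cauchyP q x y (n + m) * (w ^ m / qPoch q q m) =
      cauchyP q x y n * (qPochInf q (y * w * q ^ n) / qPochInf q (x * w)) := by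
  have hbase : y / x * q ^ n * (x * w) = y * w * q ^ n := by field_simp
  rw [← hbase, ← Phi10_eq_qPochInf_div hq _ hxw, Phi10, ← tsum_mul_left]
  refine tsum_congr fun m => ?_
  rw [cauchyP_eq_pow_mul_qPoch q hx, cauchyP_eq_pow_mul_qPoch q hx, qPoch_add]
  ring

lemma hasSum_cauchyP_mul_rogersSzego (hq : ‖q‖ < 1) (hx : x ≠ 0) {y : ℂ} (hxt : ‖x * t‖ < 1)
    (hxw : ‖x * w‖ < 1) (hyw : ∀ m : ℕ, y * w * q ^ m ≠ 1) :
    HasSum (fun m => cauchyP q x y m / qPoch q q m * rogersSzego q t w m)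
      (qPochInf q (y * w) / qPochInf q (x * w) * Phi21 q (y / x) 0 (y * w) (x * t)) := by
  obtain ⟨C, hC⟩ := exists_norm_cauchyP_le hq hx y
  convert hasSum_div_qPoch_mul_rogersSzego hq hxt hxw hC using 1
  rw [(summable_norm_comp_add_mul hq hxt hxw hC).of_norm.tsum_prod, Phi21, ← tsum_mul_left]
  refine tsum_congr fun n => ?_
  simp only [mul_right_comm _ (t ^ n / qPoch q q n)]
  rw [tsum_mul_right, tsum_cauchyP_add_mul hq hx y hxw, ← qPoch_mul_qPochInf hq (y * w) n,
    qPoch_zero_left, cauchyP_eq_pow_mul_qPoch q hx]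
  have h := qPoch_ne_zero hyw n
  field_simp
  rw [mul_pow]
  ring

lemma hasSum_cauchyP_mul_rogersSzego_mul_pow (hq : ‖q‖ < 1) (hx : x ≠ 0) {y : ℂ}
    (hxt : ‖x * t‖ < 1) (hxw : ‖x * w‖ < 1) (hyw : ∀ m : ℕ, y * w * q ^ m ≠ 1) (j : ℕ) :
    HasSum (fun m => cauchyP q x y m / qPoch q q m * rogersSzego q t (w * q ^ j) m)
      (qPochInf q (y * w) / qPochInf q (x * w) * (qPoch q (x * w) j / qPoch q (y * w) j *
        Phi21 q (y / x) 0 (y * w * q ^ j) (x * t))) := by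
  have hxwj : ‖x * w * q ^ j‖ < 1 := (norm_mul_pow_le hq.le _ j).trans_lt hxw
  have hywj (m : ℕ) : y * w * q ^ j * q ^ m ≠ 1 := by
    rw [mul_assoc, ← pow_add]
    exact hyw (j + m)
  convert hasSum_cauchyP_mul_rogersSzego (w := w * q ^ j) (y := y) hq hx hxt
    (by rwa [← mul_assoc]) (by rwa [← mul_assoc]) using 1
  have hcancel : qPoch q (y * w) j / qPoch q (x * w) j *
      (qPoch q (x * w) j / qPoch q (y * w) j) = 1 := by
    rw [div_mul_div_cancel₀ (qPoch_ne_zero_of_norm_lt_one hq.le hxw j),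
      div_self (qPoch_ne_zero hyw j)]
  rw [← mul_assoc x, ← mul_assoc y, ← qPoch_mul_qPochInf hq (y * w) j,
    ← qPoch_mul_qPochInf hq (x * w) j]
  linear_combination (qPochInf q (y * w * q ^ j) / qPochInf q (x * w * q ^ j) *
    Phi21 q (y / x) 0 (y * w * q ^ j) (x * t)) * hcancel

lemma hasSum_cauchyP_mul_rogersSzego_add (hq : ‖q‖ < 1) (hx : x ≠ 0) {y : ℂ}
    (hxt : ‖x * t‖ < 1) (hxw : ‖x * w‖ < 1) (hyw : ∀ m : ℕ, y * w * q ^ m ≠ 1) (k : ℕ) :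
    HasSum (fun m => cauchyP q x y m / qPoch q q m * rogersSzego q t w (k + m))
      (qPochInf q (y * w) / qPochInf q (x * w) * ∑ j ∈ range (k + 1),
        qBinom q k j * (t ^ j * w ^ (k - j)) * (qPoch q (x * w) j / qPoch q (y * w) j) *
          Phi21 q (y / x) 0 (y * w * q ^ j) (x * t)) := by
  have hterm (m : ℕ) : cauchyP q x y m / qPoch q q m * rogersSzego q t w (k + m) =
      ∑ j ∈ range (k + 1), qBinom q k j * (t ^ j * w ^ (k - j)) *
        (cauchyP q x y m / qPoch q q m * rogersSzego q t (w * q ^ j) m) := by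
    rw [rogersSzego_add (qPoch_ne_zero_of_norm_lt_one hq.le hq),
      Nat.sum_antidiagonal_eq_sum_range_succ_mk, mul_sum]
    exact sum_congr rfl fun j _ => mul_left_comm _ _ _
  simp only [hterm, mul_sum]
  refine hasSum_sum fun j _ => ?_
  rw [mul_assoc (qBinom q k j * _), mul_left_comm (qPochInf q (y * w) / _)]
  exact (hasSum_cauchyP_mul_rogersSzego_mul_pow hq hx hxt hxw hyw j).mul_left _

end CauchyRogersSzego

section CauchyAppell

variable {q x : ℂ}

/-- The polynomials `∑ₖ [n k]_q c_k p_{n-k}(x, y)` attached to a coefficient sequence `c`: the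
common shape of the generalized `q`-polynomials `L̃_n`, which is all the Rogers formula uses. -/
def cauchyAppell (q x y : ℂ) (c : ℕ → ℂ) (n : ℕ) : ℂ :=
  ∑ k ∈ range (n + 1), qBinom q n k * c k * cauchyP q x y (n - k)

lemma cauchyAppell_div_qPoch (hq : ∀ n, qPoch q q n ≠ 0) (x y : ℂ) (c : ℕ → ℂ) (n : ℕ) :
    cauchyAppell q x y c n / qPoch q q n = ∑ p ∈ antidiagonal n,
      c p.1 / qPoch q q p.1 * (cauchyP q x y p.2 / qPoch q q p.2) := by
  rw [Nat.sum_antidiagonal_eq_sum_range_succ_mk, cauchyAppell, sum_div]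
  refine sum_congr rfl fun k _ => ?_
  rw [qBinom]
  have h := hq n
  field_simp

lemma exists_norm_coeff_mul_cauchyP_le (hq : ‖q‖ < 1) (hx : x ≠ 0) (y : ℂ) (c : ℕ → ℂ) :
    ∃ C, 0 ≤ C ∧ ∀ k m, ‖c k / qPoch q q k * (cauchyP q x y m / qPoch q q m)‖ ≤
      C * ‖c k / x ^ k‖ * ‖x‖ ^ (k + m) := by
  have hqq := mul_pow_ne_one hq.le hq
  obtain ⟨A, hA⟩ := exists_norm_qPoch_div_qPoch_le hq 0 hqq
  obtain ⟨B, hB⟩ := exists_norm_qPoch_div_qPoch_le hq (y / x) hqq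
  have hA0 : 0 ≤ A := (norm_nonneg _).trans (hA 0)
  have hB0 : 0 ≤ B := (norm_nonneg _).trans (hB 0)
  refine ⟨A * B, mul_nonneg hA0 hB0, fun k m => ?_⟩
  have hfactor : c k / qPoch q q k * (cauchyP q x y m / qPoch q q m) =
      qPoch q 0 k / qPoch q q k * (qPoch q (y / x) m / qPoch q q m) * (c k / x ^ k) *
        x ^ (k + m) := by
    rw [cauchyP_eq_pow_mul_qPoch q hx, qPoch_zero_left, pow_add]
    field_simp
  rw [hfactor, norm_mul, norm_mul, norm_mul, norm_pow]
  gcongr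
  exacts [hA k, hB m]

lemma exists_norm_cauchyAppell_le (hq : ‖q‖ < 1) (hx : x ≠ 0) (y : ℂ) {c : ℕ → ℂ}
    (hc : Summable fun k => c k / x ^ k) :
    ∃ C, ∀ n, ‖cauchyAppell q x y c n‖ ≤ C * ‖x‖ ^ n := by
  have hqq := qPoch_ne_zero_of_norm_lt_one hq.le hq
  obtain ⟨A, hA⟩ := exists_norm_qPoch_le hq q
  obtain ⟨B, hB0, hB⟩ := exists_norm_coeff_mul_cauchyP_le hq hx y c
  have hA0 : 0 ≤ A := (norm_nonneg _).trans (hA 0)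
  have hquot (n : ℕ) : ‖cauchyAppell q x y c n / qPoch q q n‖ ≤
      (∑' k, B * ‖c k / x ^ k‖) * ‖x‖ ^ n := by
    calc ‖cauchyAppell q x y c n / qPoch q q n‖
        ≤ ∑ p ∈ antidiagonal n, B * ‖c p.1 / x ^ p.1‖ * ‖x‖ ^ n := by
          rw [cauchyAppell_div_qPoch hqq]
          exact norm_sum_le_of_le _ fun p hp => mem_antidiagonal.mp hp ▸ hB p.1 p.2
      _ = (∑ k ∈ range (n + 1), B * ‖c k / x ^ k‖) * ‖x‖ ^ n := by
          rw [Nat.sum_antidiagonal_eq_sum_range_succ_mk, sum_mul]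
      _ ≤ (∑' k, B * ‖c k / x ^ k‖) * ‖x‖ ^ n := by
          gcongr
          exact (hc.norm.mul_left B).sum_le_tsum _ fun k _ => by positivity
  refine ⟨A * ∑' k, B * ‖c k / x ^ k‖, fun n => ?_⟩
  calc ‖cauchyAppell q x y c n‖
      = ‖qPoch q q n‖ * ‖cauchyAppell q x y c n / qPoch q q n‖ := by
        rw [← norm_mul, mul_div_cancel₀ _ (hqq n)]
    _ ≤ A * ((∑' k, B * ‖c k / x ^ k‖) * ‖x‖ ^ n) := by
        gcongr
        exacts [hA n, hquot n]
    _ = A * (∑' k, B * ‖c k / x ^ k‖) * ‖x‖ ^ n := (mul_assoc _ _ _).symm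

lemma summable_mul_rogersSzego_add (hq : ‖q‖ < 1) (hx : x ≠ 0) (y : ℂ) {t w : ℂ}
    (hxt : ‖x * t‖ < 1) (hxw : ‖x * w‖ < 1) {c : ℕ → ℂ} (hc : Summable fun k => c k / x ^ k) :
    Summable fun p : ℕ × ℕ => c p.1 / qPoch q q p.1 *
      (cauchyP q x y p.2 / qPoch q q p.2 * rogersSzego q t w (p.1 + p.2)) := by
  obtain ⟨C, -, hC⟩ := exists_norm_coeff_mul_cauchyP_le hq hx y c
  refine .of_norm_bounded ((summable_mul_comp_add hc.norm
    (summable_pow_mul_rogersSzego hq hxt hxw).norm (fun k => norm_nonneg _)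
    (fun n => norm_nonneg _)).mul_left C) fun p => ?_
  rw [← mul_assoc, norm_mul, norm_mul (x ^ _), norm_pow, ← mul_assoc, ← mul_assoc]
  gcongr
  exact hC p.1 p.2

theorem stmt6_general (hq : ‖q‖ < 1) (hx : x ≠ 0) {y t w : ℂ} (hxt : ‖x * t‖ < 1)
    (hxw : ‖x * w‖ < 1) (hyw : ∀ m : ℕ, y * w * q ^ m ≠ 1) {c : ℕ → ℂ}
    (hc : Summable fun k => c k / x ^ k) :
    Summable (fun p : ℕ × ℕ => ‖cauchyAppell q x y c (p.1 + p.2) *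
        (t ^ p.1 / qPoch q q p.1) * (w ^ p.2 / qPoch q q p.2)‖) ∧
    ∑' p : ℕ × ℕ, cauchyAppell q x y c (p.1 + p.2) *
        (t ^ p.1 / qPoch q q p.1) * (w ^ p.2 / qPoch q q p.2) =
      qPochInf q (y * w) / qPochInf q (x * w) *
        ∑' k : ℕ, c k / qPoch q q k * ∑ j ∈ range (k + 1),
          qBinom q k j * (t ^ j * w ^ (k - j)) * (qPoch q (x * w) j / qPoch q (y * w) j) *
            Phi21 q (y / x) 0 (y * w * q ^ j) (x * t) := by
  obtain ⟨C, hC⟩ := exists_norm_cauchyAppell_le hq hx y hc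
  have hdouble := summable_mul_rogersSzego_add hq hx y hxt hxw hc
  refine ⟨summable_norm_comp_add_mul hq hxt hxw hC, ?_⟩
  calc _ = ∑' n, cauchyAppell q x y c n / qPoch q q n * rogersSzego q t w n :=
        (hasSum_div_qPoch_mul_rogersSzego hq hxt hxw hC).tsum_eq.symm
    _ = ∑' n, ∑ p ∈ antidiagonal n, c p.1 / qPoch q q p.1 *
          (cauchyP q x y p.2 / qPoch q q p.2 * rogersSzego q t w (p.1 + p.2)) := by
        refine tsum_congr fun n => ?_
        rw [cauchyAppell_div_qPoch (qPoch_ne_zero_of_norm_lt_one hq.le hq), sum_mul]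
        exact sum_congr rfl fun p hp => by rw [mem_antidiagonal.mp hp, mul_assoc]
    _ = ∑' k, ∑' m, c k / qPoch q q k *
          (cauchyP q x y m / qPoch q q m * rogersSzego q t w (k + m)) :=
        (hasSum_sum_antidiagonal hdouble.hasSum).tsum_eq.trans hdouble.tsum_prod
    _ = _ := by
        rw [← tsum_mul_left]
        refine tsum_congr fun k => ?_
        rw [tsum_mul_left, (hasSum_cauchyP_mul_rogersSzego_add hq hx hxt hxw hyw k).tsum_eq,
          mul_left_comm]

end CauchyAppell

section GeneralizedQPolynomial

variable {q : ℂ}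

/-- The coefficient `c_k` of `[n k]_q p_{n-k}(x, y)` in `L̃_n^{(r,s)}(α, x, y, z, a)`. -/
def ltilCoeff (q : ℂ) (r s : ℤ) (α z a : ℂ) (k : ℕ) : ℂ :=
  genQBinom q α k * q ^ (r * (k.choose 2 : ℤ) - s * ((k + 1).choose 2 : ℤ) + (k.choose 2 : ℤ)) *
    qPoch q a k * z ^ k

lemma Ltil_eq_cauchyAppell (q : ℂ) (r s : ℤ) (α x y z a : ℂ) :
    Ltil q r s α x y z a = cauchyAppell q x y (ltilCoeff q r s α z a) := by
  ext n
  exact sum_congr rfl fun k _ => by rw [ltilCoeff]; ring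

lemma ltilCoeff_eq (hq : q ≠ 0) (r s : ℤ) (α z a : ℂ) (k : ℕ) :
    ltilCoeff q r s α z a k =
      q ^ ((k : ℂ) * α) * q ^ (r * (k.choose 2 : ℤ) - s * ((k + 1).choose 2 : ℤ)) *
        (qPoch q (-(q ^ (-α))) k * qPoch q a k * z ^ k / qPoch q (-q) k) := by
  rw [ltilCoeff, genQBinom, Complex.cpow_sub _ _ hq, Complex.cpow_natCast, zpow_add₀ hq,
    zpow_natCast, mul_comm α]
  field_simp

lemma cpow_mul_zpow_choose_two (hq : q ≠ 0) (r s : ℤ) (α : ℂ) (k : ℕ) :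
    q ^ ((k : ℂ) * α) * q ^ (r * (k.choose 2 : ℤ) - s * ((k + 1).choose 2 : ℤ)) =
      (q ^ α * q ^ (-s)) ^ k * (q ^ (r - s)) ^ k.choose 2 := by
  have hexp : r * (k.choose 2 : ℤ) - s * ((k + 1).choose 2 : ℤ) =
      -s * (k : ℤ) + (r - s) * (k.choose 2 : ℤ) := by
    rw [Nat.choose_succ_succ' k 1, Nat.choose_one_right]
    push_cast
    ring
  rw [hexp, zpow_add₀ hq, zpow_mul, zpow_mul, zpow_natCast, zpow_natCast, mul_comm (k : ℂ),
    Complex.cpow_mul_nat, mul_pow, mul_assoc]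

lemma summable_ltilCoeff_div_pow (hq0 : q ≠ 0) (hq1 : ‖q‖ < 1) {r s : ℤ} (hrs : s < r)
    (α x z a : ℂ) : Summable fun k => ltilCoeff q r s α z a k / x ^ k := by
  have hQ : ‖q ^ (r - s)‖ < 1 := by
    rw [norm_zpow]
    exact zpow_lt_one₀ (norm_pos_iff.mpr hq0) hq1 (sub_pos.mpr hrs)
  obtain ⟨A, hA⟩ := exists_norm_qPoch_le hq1 a
  obtain ⟨B, hB⟩ := exists_norm_qPoch_div_qPoch_le hq1 (-(q ^ (-α)))
    (mul_pow_ne_one hq1.le (show ‖-q‖ < 1 by rwa [norm_neg]))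
  refine .of_norm_bounded ((summable_pow_mul_pow_choose_two (q ^ α * q ^ (-s) * (z / x))
    hQ).norm.mul_left (A * B)) fun k => ?_
  have hfactor : ltilCoeff q r s α z a k / x ^ k =
      qPoch q a k * (qPoch q (-(q ^ (-α))) k / qPoch q (-q) k) *
        ((q ^ α * q ^ (-s) * (z / x)) ^ k * (q ^ (r - s)) ^ k.choose 2) := by
    rw [ltilCoeff_eq hq0, cpow_mul_zpow_choose_two hq0, mul_pow _ (z / x), div_pow]
    ring
  rw [hfactor, norm_mul, norm_mul]
  gcongr
  · exact (norm_nonneg _).trans (hA k)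
  · exact hA k
  · exact hB k

lemma ltilCoeff_div_qPoch_mul_sum (hq0 : q ≠ 0) (hq1 : ‖q‖ < 1) (r s : ℤ) (α z a t : ℂ) {w : ℂ}
    (hw : w ≠ 0) (A B F : ℕ → ℂ) (k : ℕ) :
    ltilCoeff q r s α z a k / qPoch q q k *
        ∑ j ∈ range (k + 1), qBinom q k j * (t ^ j * w ^ (k - j)) * (A j / B j) * F j =
      ∑ j ∈ range (k + 1),
        q ^ ((k : ℂ) * α) * q ^ (r * (k.choose 2 : ℤ) - s * ((k + 1).choose 2 : ℤ)) *
          (qPoch q (-(q ^ (-α))) k * qPoch q a k * (w * z) ^ k /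
            (qPoch q (-q) k * qPoch q q (k - j))) *
          (A j * (t / w) ^ j / (B j * qPoch q q j)) * F j := by
  have hqk := qPoch_ne_zero_of_norm_lt_one hq1.le hq1 k
  have hcancel (j : ℕ) : qBinom q k j / qPoch q q k = (qPoch q q j * qPoch q q (k - j))⁻¹ := by
    rw [qBinom, div_right_comm, div_self hqk, one_div]
  rw [ltilCoeff_eq hq0, mul_sum]
  refine sum_congr rfl fun j hj => ?_
  rw [pow_sub₀ w hw (mem_range_succ_iff.mp hj)]
  linear_combination
    q ^ ((k : ℂ) * α) * q ^ (r * (k.choose 2 : ℤ) - s * ((k + 1).choose 2 : ℤ)) *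
      (qPoch q (-(q ^ (-α))) k * qPoch q a k * (w * z) ^ k / qPoch q (-q) k) *
      (t / w) ^ j * (A j / B j) * F j * hcancel j

end GeneralizedQPolynomial

/-- Rogers formula for the generalized q-polynomials. -/
theorem stmt6 (q : ℂ) (hq0 : q ≠ 0) (hq1 : ‖q‖ < 1) (α a x y z t ω : ℂ) (r s : ℤ)
    (hrs : s < r) (hω : ω ≠ 0) (hx : x ≠ 0) (hxω : ‖x * ω‖ < 1) (hxt : ‖x * t‖ < 1)
    (hyω : ∀ m : ℕ, y * ω * q ^ m ≠ 1) :
    Summable (fun p : ℕ × ℕ => ‖Ltil q r s α x y z a (p.1 + p.2) *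
        (t ^ p.1 / qPoch q q p.1) * (ω ^ p.2 / qPoch q q p.2)‖) ∧
    ∑' p : ℕ × ℕ, Ltil q r s α x y z a (p.1 + p.2) *
        (t ^ p.1 / qPoch q q p.1) * (ω ^ p.2 / qPoch q q p.2) =
      qPochInf q (y * ω) / qPochInf q (x * ω) *
        ∑' k : ℕ, ∑ j ∈ Finset.range (k + 1),
          q ^ ((k : ℂ) * α) * q ^ (r * (k.choose 2 : ℤ) - s * ((k + 1).choose 2 : ℤ)) *
            (qPoch q (-(q ^ (-α))) k * qPoch q a k * (ω * z) ^ k /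
              (qPoch q (-q) k * qPoch q q (k - j))) *
            (qPoch q (x * ω) j * (t / ω) ^ j / (qPoch q (y * ω) j * qPoch q q j)) *
            Phi21 q (y / x) 0 (y * ω * q ^ j) (x * t) := by
  simpa only [Ltil_eq_cauchyAppell, ltilCoeff_div_qPoch_mul_sum hq0 hq1 r s α z a t hω] using
    stmt6_general hq1 hx hxt hxω hyω (summable_ltilCoeff_div_pow hq0 hq1 hrs α x z a)

end
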